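/- arXiv:1910.09391 — 2 statements merged into one kernel-verified Lean document; each statement's English description precedes it below -/
import Mathlib

section
/- Fix an integer p ≥ 2, θ ∈ S^{p-1}, f ∈ 𝓕, and a sequence (κ_n) of nonzero real numbers with κ_n = O(1/√n). Then the sequence of alternatives P^{(n)}_{θ,κ_n,f} and the sequence of null hypotheses P_0^{(n)} are mutually contiguous; explicitly, for every sequence (A_n) of measurable sets A_n ⊆ (S^{p-1})^n, one has P_0^{(n)}(A_n) → 0 as n → ∞ if and only if P^{(n)}_{θ,κ_n,f}(A_n) → 0 as n → ∞. -/
open MeasureTheory ProbabilityTheory Filter Matrix Real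
open scoped ENNReal NNReal Topology

noncomputable section

/-- The normalizing constant `c_p = 1 / ∫_{-1}^1 (1-s²)^{(p-3)/2} ds`. -/
def c0 (p : ℕ) : ℝ := 1 / ∫ s in (-1:ℝ)..1, (1 - s ^ 2) ^ (((p : ℝ) - 3) / 2)

/-- The normalizing constant `c_{p,κ,f} = 1 / ∫_{-1}^1 (1-s²)^{(p-3)/2} f(κ s²) ds`. -/
def cKF (p : ℕ) (κ : ℝ) (f : ℝ → ℝ) : ℝ :=
  1 / ∫ s in (-1:ℝ)..1, (1 - s ^ 2) ^ (((p : ℝ) - 3) / 2) * f (κ * s ^ 2)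

/-- Tonelli's theorem for a product of functions of the separate coordinates. -/
theorem lintegral_pi_prod_eq_prod {E : Type*} [MeasurableSpace E] (μ : Measure E)
    [SigmaFinite μ] {n : ℕ} (f : Fin n → E → ℝ≥0∞) (hf : ∀ i, Measurable (f i)) :
    ∫⁻ x, ∏ i, f i (x i) ∂(Measure.pi fun _ : Fin n => μ) = ∏ i, ∫⁻ x, f i x ∂μ := by
  induction n with
  | zero => simp
  | succ n ih =>
    rw [← ((measurePreserving_piFinSuccAbove (fun _ : Fin (n + 1) => μ) 0).symm).lintegral_comp_emb
      (MeasurableEquiv.measurableEmbedding _)]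
    simp_rw [MeasurableEquiv.piFinSuccAbove_symm_apply, Fin.insertNthEquiv,
      Fin.prod_univ_succ, Fin.insertNth_zero, Equiv.coe_fn_mk, Fin.cons_succ, Fin.cons_zero]
    rw [← ih (fun i => f (Fin.succ i)) fun i => hf (Fin.succ i)]
    exact lintegral_prod_mul (hf 0).aemeasurable
      (Finset.measurable_prod _ fun i _ =>
        (hf (Fin.succ i)).comp (measurable_pi_apply i)).aemeasurable

/-- A power of a measure with density has the product density. -/
theorem pi_withDensity_eq {E : Type*} [MeasurableSpace E] (μ : Measure E) [SigmaFinite μ]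
    {ρ : E → ℝ≥0∞} (hρ : Measurable ρ) [SigmaFinite (μ.withDensity ρ)] (n : ℕ) :
    Measure.pi (fun _ : Fin n => μ.withDensity ρ) =
      (Measure.pi fun _ : Fin n => μ).withDensity fun x => ∏ i, ρ (x i) := by
  refine Measure.pi_eq fun s hs => ?_
  rw [withDensity_apply _ (MeasurableSet.univ_pi hs), ← lintegral_indicator (.univ_pi hs)]
  have h : ∀ x : Fin n → E, (Set.univ.pi s).indicator (fun x => ∏ i, ρ (x i)) x =
      ∏ i, (s i).indicator ρ (x i) := by
    intro x
    by_cases hx : x ∈ Set.univ.pi s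
    · rw [Set.indicator_of_mem hx]
      exact Finset.prod_congr rfl fun i _ => (Set.indicator_of_mem (hx i trivial) _).symm
    · rw [Set.indicator_of_notMem hx]
      obtain ⟨i, hi⟩ : ∃ i, x i ∉ s i := by simpa [Set.mem_pi] using hx
      exact (Finset.prod_eq_zero (Finset.mem_univ i) (Set.indicator_of_notMem hi _)).symm
  simp_rw [h]
  rw [lintegral_pi_prod_eq_prod _ _ fun i => hρ.indicator (hs i)]
  exact Finset.prod_congr rfl fun i _ => by
    rw [withDensity_apply _ (hs i), lintegral_indicator (hs i)]

/-- Cauchy–Schwarz bound for a product measure in terms of the second moment of the density. -/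
theorem sq_pi_withDensity_le {E : Type*} [MeasurableSpace E] (μ : Measure E) [SigmaFinite μ]
    {ρ : E → ℝ≥0∞} (hρ : Measurable ρ) [SigmaFinite (μ.withDensity ρ)] {n : ℕ}
    {A : Set (Fin n → E)} (hA : MeasurableSet A) :
    Measure.pi (fun _ => μ.withDensity ρ) A ^ 2 ≤
      Measure.pi (fun _ => μ) A * (∫⁻ x, ρ x ^ 2 ∂μ) ^ n := by
  have hm : Measurable fun x : Fin n → E => ∏ i, ρ (x i) :=
    Finset.measurable_prod _ fun i _ => hρ.comp (measurable_pi_apply i)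
  have hL : ∫⁻ x : Fin n → E, (∏ i, ρ (x i)) ^ 2 ∂(Measure.pi fun _ => μ) =
      (∫⁻ x, ρ x ^ 2 ∂μ) ^ n := by
    simp_rw [← Finset.prod_pow]
    rw [lintegral_pi_prod_eq_prod μ (fun _ x => ρ x ^ 2) fun _ => hρ.pow_const 2]
    simp
  rw [pi_withDensity_eq μ hρ, withDensity_apply _ hA, ← hL]
  have := ENNReal.lintegral_mul_le_Lp_mul_Lq ((Measure.pi fun _ : Fin n => μ).restrict A)
    Real.HolderConjugate.two_two (f := fun _ => 1) (g := fun x => ∏ i, ρ (x i))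
    aemeasurable_const hm.aemeasurable
  simp only [Pi.mul_apply, one_mul, ENNReal.one_rpow, lintegral_one,
    Measure.restrict_apply_univ] at this
  refine (pow_le_pow_left' this 2).trans ?_
  have hsq : ∀ a : ℝ≥0∞, (a ^ (1 / 2 : ℝ)) ^ 2 = a := fun a => by
    rw [← ENNReal.rpow_natCast, ← ENNReal.rpow_mul]
    norm_num
  rw [mul_pow, hsq, hsq]
  simp only [ENNReal.rpow_ofNat]
  gcongr
  exact Measure.restrict_le_self

/-- Cauchy–Schwarz bound in the reverse direction, through the inverse density. -/
theorem sq_pi_le_withDensity {E : Type*} [MeasurableSpace E] (μ : Measure E) [SigmaFinite μ]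
    {ρ : E → ℝ≥0∞} (hρ : Measurable ρ) (h0 : ∀ x, ρ x ≠ 0) (htop : ∀ x, ρ x ≠ ∞) {n : ℕ}
    {A : Set (Fin n → E)} (hA : MeasurableSet A) :
    Measure.pi (fun _ => μ) A ^ 2 ≤
      Measure.pi (fun _ => μ.withDensity ρ) A * (∫⁻ x, (ρ x)⁻¹ ∂μ) ^ n := by
  have := SigmaFinite.withDensity_of_ne_top' (μ := μ) htop
  have hback : (μ.withDensity ρ).withDensity (fun x => (ρ x)⁻¹) = μ :=
    withDensity_inv_same hρ (ae_of_all _ h0) (ae_of_all _ htop)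
  have hint : ∫⁻ x, ((ρ x)⁻¹) ^ 2 ∂(μ.withDensity ρ) = ∫⁻ x, (ρ x)⁻¹ ∂μ := by
    rw [lintegral_withDensity_eq_lintegral_mul _ hρ (f := ρ)
      (g := fun x => (ρ x)⁻¹ ^ 2) (hρ.inv.pow_const 2)]
    refine lintegral_congr fun x => ?_
    simp only [Pi.mul_apply]
    rw [sq, ← mul_assoc, ENNReal.mul_inv_cancel (h0 x) (htop x), one_mul]
  have hs : SigmaFinite ((μ.withDensity ρ).withDensity fun x => (ρ x)⁻¹) := by
    rwa [hback]
  have h := sq_pi_withDensity_le (μ.withDensity ρ) (ρ := fun x => (ρ x)⁻¹) hρ.inv (A := A) hA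
  rwa [hint, hback] at h

/-- Second-order Taylor bound at a point where the derivative is differentiable. -/
theorem exists_taylor_bound_at_zero {f : ℝ → ℝ}
    (hf_diff : ∀ᶠ x in 𝓝 (0 : ℝ), DifferentiableAt ℝ f x)
    (hf_diff2 : DifferentiableAt ℝ (deriv f) 0) :
    ∃ C δ : ℝ, 0 ≤ C ∧ 0 < δ ∧ ∀ u, |u| < δ → |f u - f 0 - deriv f 0 * u| ≤ C * u ^ 2 := by
  obtain ⟨C, hC, hbd⟩ := hf_diff2.isBigO_sub.exists_pos
  obtain ⟨δ, hδ, hall⟩ := Metric.eventually_nhds_iff.1 (hf_diff.and hbd.bound)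
  refine ⟨C, δ, hC.le, hδ, fun u hu => ?_⟩
  have hball : ∀ x ∈ Metric.closedBall (0 : ℝ) |u|,
      HasDerivWithinAt (fun y => f y - deriv f 0 * y) (deriv f x - deriv f 0)
        (Metric.closedBall 0 |u|) x ∧ ‖deriv f x - deriv f 0‖ ≤ C * |u| := by
    intro x hx
    have hx' : |x| ≤ |u| := by simpa using hx
    obtain ⟨hd, hb⟩ := hall (y := x) (by simpa using hx'.trans_lt hu)
    refine ⟨?_, hb.trans ?_⟩
    · have hlin : HasDerivAt (fun y => deriv f 0 * y) (deriv f 0) x := by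
        simpa using (hasDerivAt_id x).const_mul (deriv f 0)
      exact (hd.hasDerivAt.sub hlin).hasDerivWithinAt
    · simpa using mul_le_mul_of_nonneg_left hx' hC.le
  have := (convex_closedBall (0 : ℝ) |u|).norm_image_sub_le_of_norm_hasDerivWithin_le
    (fun x hx => (hball x hx).1) (fun x hx => (hball x hx).2)
    (Metric.mem_closedBall_self (abs_nonneg u)) (show u ∈ Metric.closedBall 0 |u| by simp)
  rw [Real.norm_eq_abs] at this
  calc |f u - f 0 - deriv f 0 * u| = |f u - deriv f 0 * u - (f 0 - deriv f 0 * 0)| := by ring_nf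
    _ ≤ C * |u| * |u - 0| := this
    _ = C * u ^ 2 := by rw [sub_zero, mul_assoc, abs_mul_abs_self, sq]

/-- Expansion of the likelihood ratio `F / G` to first order in `k`, in terms of expansions of `F`
and `G`. -/
theorem abs_div_sub_le_of_expansions {k C t m F G : ℝ} (hC : 0 ≤ C) (ht0 : 0 ≤ t) (ht1 : t ≤ 1)
    (hm0 : 0 ≤ m) (hm1 : m ≤ 1) (hF : |F - 1 - k * t| ≤ C * k ^ 2)
    (hG : |G - 1 - k * m| ≤ C * k ^ 2) (hG2 : 1 / 2 ≤ G) (hk : |k| ≤ 1) :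
    |F / G - 1 - k * (t - m)| ≤ (6 * C + 2) * k ^ 2 := by
  have hGpos : 0 < G := by linarith
  have key : F / G - 1 - k * (t - m) =
      ((F - 1 - k * t) - (G - 1 - k * m) - k ^ 2 * ((t - m) * m)
        - (k * (t - m)) * (G - 1 - k * m)) / G := by
    field_simp
    ring
  have htm : |t - m| ≤ 1 := abs_le.2 ⟨by linarith, by linarith⟩
  have h3 : |k ^ 2 * ((t - m) * m)| ≤ k ^ 2 := by
    rw [abs_mul, abs_of_nonneg (sq_nonneg k), abs_mul, abs_of_nonneg hm0]
    exact mul_le_of_le_one_right (sq_nonneg k) (mul_le_one₀ htm hm0 hm1)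
  have h4 : |(k * (t - m)) * (G - 1 - k * m)| ≤ C * k ^ 2 := by
    rw [abs_mul, abs_mul]
    exact (mul_le_of_le_one_left (abs_nonneg _) (mul_le_one₀ hk (abs_nonneg _) htm)).trans hG
  rw [key, abs_div, abs_of_pos hGpos, div_le_iff₀ hGpos]
  have hnum : |(F - 1 - k * t) - (G - 1 - k * m) - k ^ 2 * ((t - m) * m)
        - (k * (t - m)) * (G - 1 - k * m)| ≤ (3 * C + 1) * k ^ 2 := by
    rw [abs_le] at *
    constructor <;> linarith [hF.1, hF.2, hG.1, hG.2, h3.1, h3.2, h4.1, h4.2]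
  refine hnum.trans ?_
  nlinarith [mul_nonneg (show 0 ≤ 6 * C + 2 by linarith) (sq_nonneg k)]

/-- First-order upper bounds for the square and the inverse of a number close to `1`. -/
theorem sq_and_inv_le_of_expansion {k K d y : ℝ} (hK : 0 ≤ K) (hd : |d| ≤ 1)
    (hy : |y - 1 - k * d| ≤ K * k ^ 2) (hk : |k| ≤ 1) (hy2 : 1 / 2 ≤ y) :
    y ^ 2 ≤ 1 + 2 * k * d + (2 * K + 2 * (1 + K) ^ 2) * k ^ 2 ∧
      y⁻¹ ≤ 1 + -k * d + (2 * K + 2 * (1 + K) ^ 2) * k ^ 2 := by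
  have h1 : |y - 1| ≤ (1 + K) * |k| := by
    have hkd : |k * d| ≤ |k| := by
      rw [abs_mul]; exact mul_le_of_le_one_right (abs_nonneg _) hd
    have hkk : k ^ 2 ≤ |k| := by
      rw [← sq_abs]; nlinarith [abs_nonneg k]
    have := mul_le_mul_of_nonneg_left hkk hK
    calc |y - 1| = |(y - 1 - k * d) + k * d| := by ring_nf
      _ ≤ |y - 1 - k * d| + |k * d| := abs_add_le _ _
      _ ≤ (1 + K) * |k| := by linarith
  have h2 : (y - 1) ^ 2 ≤ (1 + K) ^ 2 * k ^ 2 := by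
    rw [← sq_abs, ← sq_abs k, ← mul_pow]
    exact pow_le_pow_left₀ (abs_nonneg _) h1 2
  have hKk : 0 ≤ K * k ^ 2 := by positivity
  rw [abs_le] at hy
  constructor
  · nlinarith [hy.2]
  · have hypos : 0 < y := by linarith
    have h3 : y⁻¹ ≤ 1 - (y - 1) + 2 * (y - 1) ^ 2 := by
      rw [inv_le_iff_one_le_mul₀ hypos]
      nlinarith [mul_nonneg (sq_nonneg (y - 1)) (show 0 ≤ 2 * y - 1 by linarith)]
    nlinarith [hy.1]

/-- Upper bound for the integral of a function dominated by an affine function of a centred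
variable. -/
theorem lintegral_ofReal_le_of_le_affine {E : Type*} [MeasurableSpace E] {μ : Measure E}
    [IsProbabilityMeasure μ] {T h : E → ℝ} {m a b : ℝ} (hT : Integrable T μ)
    (hTm : ∫ x, T x ∂μ = m) (h0 : ∀ x, 0 ≤ h x)
    (hle : ∀ᵐ x ∂μ, h x ≤ 1 + a * (T x - m) + b) :
    ∫⁻ x, ENNReal.ofReal (h x) ∂μ ≤ ENNReal.ofReal (1 + b) := by
  have hint : Integrable (fun x => 1 + a * (T x - m) + b) μ := by fun_prop
  calc ∫⁻ x, ENNReal.ofReal (h x) ∂μ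
      ≤ ∫⁻ x, ENNReal.ofReal (1 + a * (T x - m) + b) ∂μ :=
        lintegral_mono_ae (hle.mono fun x hx => ENNReal.ofReal_le_ofReal hx)
    _ = ENNReal.ofReal (∫ x, (1 + a * (T x - m) + b) ∂μ) :=
        (ofReal_integral_eq_lintegral_ofReal hint (hle.mono fun x hx => (h0 x).trans hx)).symm
    _ = ENNReal.ofReal (1 + b) := by
        congr 1
        rw [integral_add (by fun_prop) (by fun_prop), integral_add (by fun_prop) (by fun_prop),
          integral_const_mul, integral_sub hT (by fun_prop), hTm]
        simp

/-- A rotation-invariant distribution on the unit sphere has second moment matrix `I / p`. -/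
theorem integrable_and_integral_sq_of_rotation_invariant {p : ℕ} (hp : 0 < p)
    {U : Measure (Fin p → ℝ)} [IsProbabilityMeasure U]
    (hUsphere : U {x : Fin p → ℝ | ∑ a, x a ^ 2 = 1}ᶜ = 0)
    (hUrot : ∀ O : Matrix (Fin p) (Fin p) ℝ, O * Oᵀ = 1 →
      Measure.map (fun x => O.mulVec x) U = U)
    {θ : Fin p → ℝ} (hθ : ∑ a, θ a ^ 2 = 1) :
    Integrable (fun x => (∑ a, x a * θ a) ^ 2) U ∧
      ∫ x, (∑ a, x a * θ a) ^ 2 ∂U = 1 / p := by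
  have hS : ∀ᵐ x ∂U, ∑ a, x a ^ 2 = 1 := hUsphere
  have hint : ∀ a b, Integrable (fun x : Fin p → ℝ => x a * x b) U := by
    intro a b
    refine Integrable.of_bound (C := 1) (by fun_prop) (hS.mono fun x hx => ?_)
    have ha : ∀ c, |x c| ≤ 1 := fun c => by
      rw [← sq_le_one_iff_abs_le_one, ← hx]
      exact Finset.single_le_sum (f := fun i => x i ^ 2) (fun i _ => sq_nonneg _)
        (Finset.mem_univ c)
    rw [Real.norm_eq_abs, abs_mul]
    exact mul_le_one₀ (ha a) (abs_nonneg _) (ha b)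
  have hinv : ∀ O : Matrix (Fin p) (Fin p) ℝ, O * Oᵀ = 1 → ∀ a b,
      ∫ x, (O *ᵥ x) a * (O *ᵥ x) b ∂U = ∫ x, x a * x b ∂U := by
    intro O hO a b
    have hm : Measurable fun x : Fin p → ℝ => O *ᵥ x :=
      (Continuous.matrix_mulVec continuous_const continuous_id).measurable
    conv_rhs => rw [← hUrot O hO]
    rw [integral_map hm.aemeasurable (by fun_prop)]
  have hoff : ∀ a b, a ≠ b → ∫ x, x a * x b ∂U = 0 := by
    intro a b hab
    have := hinv (Matrix.diagonal fun i => if i = a then -1 else 1) (by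
      rw [Matrix.diagonal_transpose, Matrix.diagonal_mul_diagonal, ← Matrix.diagonal_one]
      congr 1; ext i; split_ifs <;> norm_num) a b
    simp only [Matrix.mulVec_diagonal, if_neg hab.symm, if_true, neg_mul, one_mul,
      integral_neg] at this
    linarith
  have hdiag : ∀ a b, ∫ x, x a * x a ∂U = ∫ x, x b * x b ∂U := by
    intro a b
    have := hinv ((Equiv.swap a b).permMatrix ℝ) (by
      rw [Matrix.transpose_permMatrix, ← Matrix.permMatrix_mul]; simp) a a
    simp only [Matrix.permMatrix_mulVec, Function.comp_apply, Equiv.swap_apply_left] at this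
    exact this.symm
  have hmean : ∀ a, ∫ x, x a * x a ∂U = 1 / p := by
    intro a
    have h1 : ∑ b, ∫ x, x b * x b ∂U = 1 := by
      rw [← integral_finsetSum _ fun b _ => hint b b]
      rw [integral_congr_ae (g := fun _ => 1) (hS.mono fun x hx => by simpa [sq] using hx)]
      simp
    rw [Finset.sum_congr rfl fun b _ => hdiag b a] at h1
    simp only [Finset.sum_const, Finset.card_univ, Fintype.card_fin, nsmul_eq_mul] at h1
    rw [eq_div_iff (by positivity), mul_comm, h1]
  have hexp : (fun x : Fin p → ℝ => (∑ a, x a * θ a) ^ 2) =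
      fun x => ∑ a, ∑ b, (θ a * θ b) * (x a * x b) := by
    ext x
    rw [sq, Finset.sum_mul_sum]
    exact Finset.sum_congr rfl fun a _ => Finset.sum_congr rfl fun b _ => by ring
  rw [hexp]
  have hint' : ∀ a b, Integrable (fun x : Fin p → ℝ => (θ a * θ b) * (x a * x b)) U :=
    fun a b => (hint a b).const_mul _
  refine ⟨integrable_finsetSum _ fun a _ => integrable_finsetSum _ fun b _ => hint' a b, ?_⟩
  rw [integral_finsetSum _ fun a _ => integrable_finsetSum _ fun b _ => hint' a b]
  calc ∑ a, ∫ x, ∑ b, (θ a * θ b) * (x a * x b) ∂U = ∑ a, θ a ^ 2 * (1 / p) := by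
        refine Finset.sum_congr rfl fun a _ => ?_
        rw [integral_finsetSum _ fun b _ => hint' a b]
        simp_rw [integral_const_mul]
        rw [Finset.sum_eq_single a (fun b _ hb => by rw [hoff a b hb.symm, mul_zero]) (by simp),
          hmean a, sq]
    _ = 1 / p := by rw [← Finset.sum_mul, hθ, one_mul]

/-- The weight `(1 - s²)^{(p-3)/2}` is integrable on `[-1, 1]`. -/
theorem intervalIntegrable_one_sub_sq_rpow {a : ℝ} (ha : -1 < a) :
    IntervalIntegrable (fun s : ℝ => (1 - s ^ 2) ^ a) volume (-1) 1 := by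
  have hr : IntervalIntegrable (fun s : ℝ => (1 - s ^ 2) ^ a) volume 0 1 := by
    have h1 : IntervalIntegrable (fun s : ℝ => (1 - s) ^ a) volume 0 1 := by
      simpa using ((intervalIntegral.intervalIntegrable_rpow' (a := 0) (b := 1) ha).comp_sub_left
        1).symm
    have h2 : ContinuousOn (fun s : ℝ => (1 + s) ^ a) (Set.uIcc 0 1) := by
      refine ContinuousOn.rpow_const (by fun_prop) fun s hs => Or.inl ?_
      rw [Set.uIcc_of_le zero_le_one] at hs
      linarith [hs.1]
    refine (h1.mul_continuousOn h2).congr fun s hs => ?_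
    rw [Set.uIoc_of_le zero_le_one] at hs
    rw [← Real.mul_rpow (by linarith [hs.2]) (by linarith [hs.1])]
    ring_nf
  have hl : IntervalIntegrable (fun s : ℝ => (1 - s ^ 2) ^ a) volume (-1) 0 := by
    simpa using (hr.comp_sub_left 0).symm
  exact hl.trans hr

theorem integral_one_sub_sq_rpow_pos {a : ℝ} (ha : -1 < a) :
    0 < ∫ s in (-1 : ℝ)..1, (1 - s ^ 2) ^ a :=
  intervalIntegral.intervalIntegral_pos_of_pos_on (intervalIntegrable_one_sub_sq_rpow ha)
    (fun s hs => Real.rpow_pos_of_pos (by nlinarith [hs.1, hs.2]) _) (by norm_num)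

theorem intervalIntegrable_one_sub_sq_rpow_mul_sq {a : ℝ} (ha : -1 < a) :
    IntervalIntegrable (fun s : ℝ => (1 - s ^ 2) ^ a * s ^ 2) volume (-1) 1 :=
  (intervalIntegrable_one_sub_sq_rpow ha).mul_continuousOn (by fun_prop)

/-- The second moment of the weight `(1 - s²)^a`, by parts. -/
theorem integral_one_sub_sq_rpow_mul_sq {a : ℝ} (ha : -1 < a) :
    ∫ s in (-1 : ℝ)..1, (1 - s ^ 2) ^ a * s ^ 2 =
      (∫ s in (-1 : ℝ)..1, (1 - s ^ 2) ^ a) * (1 / (2 * a + 3)) := by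
  have h0 := intervalIntegrable_one_sub_sq_rpow ha
  have h2 := intervalIntegrable_one_sub_sq_rpow_mul_sq ha
  have key := intervalIntegral.integral_eq_sub_of_hasDerivAt_of_le (a := -1) (b := 1)
    (f := fun s : ℝ => s * (1 - s ^ 2) ^ (a + 1))
    (f' := fun s => (1 - s ^ 2) ^ a - (2 * a + 3) * ((1 - s ^ 2) ^ a * s ^ 2))
    (by norm_num)
    (by
      refine continuousOn_id.mul (ContinuousOn.rpow_const (by fun_prop) fun s _ => Or.inr ?_)
      linarith)
    (by
      intro s hs
      have hpos : 0 < 1 - s ^ 2 := by nlinarith [hs.1, hs.2]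
      have hin : HasDerivAt (fun s : ℝ => 1 - s ^ 2) (-(2 * s)) s := by
        simpa using ((hasDerivAt_id s).pow 2).const_sub 1
      have := (hasDerivAt_id s).mul (hin.rpow_const (p := a + 1) (Or.inl hpos.ne'))
      refine this.congr_deriv ?_
      rw [add_sub_cancel_right, Real.rpow_add hpos, Real.rpow_one]
      simp only [id]
      ring)
    (h0.sub (h2.const_mul _))
  rw [intervalIntegral.integral_sub h0 (h2.const_mul _), intervalIntegral.integral_const_mul]
    at key
  have hz : (0 : ℝ) ^ (a + 1) = 0 := Real.zero_rpow (by linarith)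
  norm_num [hz] at key
  have : 2 * a + 3 ≠ 0 := by linarith
  rw [mul_one_div, eq_div_iff this]
  linarith

/-- Expansion of the ratio of normalizing constants. -/
theorem abs_normalizing_ratio_sub_le {p : ℕ} (hp : 2 ≤ p) {f : ℝ → ℝ} (hf : Monotone f)
    {C k : ℝ} (hC : ∀ t, 0 ≤ t → t ≤ 1 → |f (k * t) - 1 - k * t| ≤ C * k ^ 2) :
    ∃ G : ℝ, cKF p k f / c0 p = 1 / G ∧ |G - 1 - k * (1 / p)| ≤ C * k ^ 2 := by
  have hp' : (2 : ℝ) ≤ p := by exact_mod_cast hp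
  set a : ℝ := ((p : ℝ) - 3) / 2 with ha_def
  have ha : -1 < a := by rw [ha_def]; linarith
  have hap : 2 * a + 3 = p := by rw [ha_def]; ring
  have h0 := intervalIntegrable_one_sub_sq_rpow ha
  have h2 := intervalIntegrable_one_sub_sq_rpow_mul_sq ha
  have hI := integral_one_sub_sq_rpow_pos ha
  have hM := integral_one_sub_sq_rpow_mul_sq ha
  rw [hap] at hM
  set w : ℝ → ℝ := fun s => (1 - s ^ 2) ^ a with hw
  set I := ∫ s in (-1 : ℝ)..1, w s with hI_def
  have hbound : ∀ s ∈ Set.uIoc (-1 : ℝ) 1,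
      0 ≤ w s ∧ |f (k * s ^ 2) - 1 - k * s ^ 2| ≤ C * k ^ 2 := by
    intro s hs
    rw [Set.uIoc_of_le (by norm_num)] at hs
    have hs1 : s ^ 2 ≤ 1 := by nlinarith [hs.1, hs.2]
    exact ⟨Real.rpow_nonneg (by linarith) _, hC _ (sq_nonneg s) hs1⟩
  have hmeas : Measurable fun s : ℝ => w s * (f (k * s ^ 2) - 1 - k * s ^ 2) := by
    have := hf.measurable
    fun_prop
  have hE : IntervalIntegrable (fun s => w s * (f (k * s ^ 2) - 1 - k * s ^ 2)) volume (-1) 1 := by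
    refine (h0.const_mul (C * k ^ 2)).mono_fun hmeas.aestronglyMeasurable ?_
    refine (ae_restrict_iff' measurableSet_uIoc).2 (ae_of_all _ fun s hs => ?_)
    obtain ⟨hw0, hb⟩ := hbound s hs
    have hb' := (abs_nonneg _).trans hb
    beta_reduce
    rw [Real.norm_eq_abs, Real.norm_eq_abs, abs_mul, abs_mul, abs_of_nonneg hw0,
      abs_of_nonneg hb', mul_comm (C * k ^ 2)]
    exact mul_le_mul_of_nonneg_left hb hw0
  have hJ : ∫ s in (-1 : ℝ)..1, w s * f (k * s ^ 2) =
      I + k * (I * (1 / p)) + ∫ s in (-1 : ℝ)..1, w s * (f (k * s ^ 2) - 1 - k * s ^ 2) := by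
    rw [← hM, ← intervalIntegral.integral_const_mul, hI_def, ← intervalIntegral.integral_add h0
      (h2.const_mul k), ← intervalIntegral.integral_add (h0.add (h2.const_mul k)) hE]
    refine intervalIntegral.integral_congr fun s _ => ?_
    simp only [hw]
    ring
  have herr : |∫ s in (-1 : ℝ)..1, w s * (f (k * s ^ 2) - 1 - k * s ^ 2)| ≤ C * k ^ 2 * I := by
    rw [hI_def, ← intervalIntegral.integral_const_mul, ← Real.norm_eq_abs]
    refine intervalIntegral.norm_integral_le_of_norm_le (by norm_num) (ae_of_all _ fun s hs => ?_)
      (h0.const_mul _)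
    rw [← Set.uIoc_of_le (by norm_num)] at hs
    obtain ⟨hw0, hb⟩ := hbound s hs
    rw [Real.norm_eq_abs, abs_mul, abs_of_nonneg hw0, mul_comm]
    exact mul_le_mul_of_nonneg_right hb hw0
  refine ⟨(∫ s in (-1 : ℝ)..1, w s * f (k * s ^ 2)) / I, ?_, ?_⟩
  · rw [cKF, c0, one_div_div, div_div_eq_mul_div, div_one, one_div_mul_eq_div]
  · rw [hJ]
    have : (I + k * (I * (1 / p)) +
        ∫ s in (-1 : ℝ)..1, w s * (f (k * s ^ 2) - 1 - k * s ^ 2)) / I - 1 - k * (1 / p) =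
        (∫ s in (-1 : ℝ)..1, w s * (f (k * s ^ 2) - 1 - k * s ^ 2)) / I := by
      field_simp
      ring
    rw [this, abs_div, abs_of_pos hI, div_le_iff₀ hI]
    exact herr

/-- If `u n ^ 2 ≤ v n * K` eventually with `K` finite, then `v → 0` forces `u → 0`. -/
theorem tendsto_zero_of_sq_le_mul {u v : ℕ → ℝ≥0∞} {K : ℝ≥0∞} (hK : K ≠ ∞)
    (h : ∀ᶠ n in atTop, u n ^ 2 ≤ v n * K) (hv : Tendsto v atTop (𝓝 0)) :
    Tendsto u atTop (𝓝 0) := by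
  have h1 : Tendsto (fun n => v n * K) atTop (𝓝 0) := by
    simpa using ENNReal.Tendsto.mul_const hv (Or.inr hK)
  have h2 : Tendsto (fun n => u n ^ 2) atTop (𝓝 0) :=
    tendsto_of_tendsto_of_tendsto_of_le_of_le' tendsto_const_nhds h1
      (Eventually.of_forall fun _ => zero_le) h
  have h3 := (ENNReal.continuous_rpow_const (y := (1 / 2 : ℝ))).continuousAt.tendsto.comp h2
  rw [ENNReal.zero_rpow_of_pos (by norm_num)] at h3
  refine h3.congr fun n => ?_
  rw [Function.comp_apply, ← ENNReal.rpow_natCast, ← ENNReal.rpow_mul]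
  norm_num

theorem ofReal_one_add_pow_le {b M : ℝ} (hb : 0 ≤ b) {n : ℕ} (h : n * b ≤ M) :
    ENNReal.ofReal (1 + b) ^ n ≤ ENNReal.ofReal (Real.exp M) := by
  rw [← ENNReal.ofReal_pow (by linarith)]
  refine ENNReal.ofReal_le_ofReal ?_
  calc (1 + b) ^ n ≤ Real.exp b ^ n :=
        pow_le_pow_left₀ (by linarith) (by linarith [Real.add_one_le_exp b]) n
    _ = Real.exp (n * b) := (Real.exp_nat_mul b n).symm
    _ ≤ Real.exp M := Real.exp_le_exp.2 h

/-- The likelihood ratio expands as `1 + κ (t - 1/p) + O(κ²)`, uniformly in `t ∈ [0, 1]`. -/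
theorem exists_likelihood_ratio_expansion {p : ℕ} (hp : 2 ≤ p) {f : ℝ → ℝ} (hf_mono : Monotone f)
    (hf_diff : ∀ᶠ x in 𝓝 (0 : ℝ), DifferentiableAt ℝ f x)
    (hf_diff2 : DifferentiableAt ℝ (deriv f) 0) (hf0 : f 0 = 1) (hf'0 : deriv f 0 = 1) :
    ∃ K : ℝ, 0 ≤ K ∧ ∀ᶠ k in 𝓝 (0 : ℝ), |k| ≤ 1 ∧ ∀ t, 0 ≤ t → t ≤ 1 →
      |cKF p k f / c0 p * f (k * t) - 1 - k * (t - 1 / p)| ≤ K * k ^ 2 ∧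
        1 / 2 ≤ cKF p k f / c0 p * f (k * t) := by
  obtain ⟨C, δ, hC, hδ, hT⟩ := exists_taylor_bound_at_zero hf_diff hf_diff2
  rw [hf0, hf'0] at hT
  have hp' : (1 : ℝ) ≤ p := by exact_mod_cast (by lia : 1 ≤ p)
  have hm0 : (0 : ℝ) ≤ 1 / p := by positivity
  have hm1 : (1 : ℝ) / p ≤ 1 := (div_le_one (by linarith)).2 hp'
  set K := 6 * C + 2 with hK
  refine ⟨K, by positivity, ?_⟩
  have small : ∀ {ε : ℝ}, 0 < ε → ∀ᶠ k in 𝓝 (0 : ℝ), |k| < ε := fun hε =>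
    (continuous_abs.tendsto' (0 : ℝ) 0 abs_zero).eventually_lt_const hε
  have hq : ∀ᶠ k in 𝓝 (0 : ℝ), |k| + K * k ^ 2 < 1 / 2 :=
    ((by fun_prop : Continuous fun k : ℝ => |k| + K * k ^ 2).tendsto' 0 0
      (by simp)).eventually_lt_const (by norm_num)
  filter_upwards [small hδ, small one_pos, hq] with k hkδ hk1 hkq
  have hCK : C * k ^ 2 ≤ K * k ^ 2 := by
    gcongr; linarith
  have hfk : ∀ t, 0 ≤ t → t ≤ 1 → |f (k * t) - 1 - k * t| ≤ C * k ^ 2 := by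
    intro t ht0 ht1
    have h1 : |k * t| ≤ |k| := by
      rw [abs_mul, abs_of_nonneg ht0]; exact mul_le_of_le_one_right (abs_nonneg _) ht1
    have h2 := hT (k * t) (h1.trans_lt hkδ)
    rw [one_mul] at h2
    exact h2.trans (mul_le_mul_of_nonneg_left (sq_le_sq.2 h1) hC)
  obtain ⟨G, hratio, hG⟩ := abs_normalizing_ratio_sub_le hp hf_mono hfk
  have hkd : ∀ d : ℝ, |d| ≤ 1 → -|k| ≤ k * d := fun d hd => by
    refine (abs_le.1 ?_).1
    rw [abs_mul]; exact mul_le_of_le_one_right (abs_nonneg _) hd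
  have hG2 : 1 / 2 ≤ G := by
    linarith [(abs_le.1 hG).1, hkd (1 / p) (by rwa [abs_of_nonneg hm0])]
  refine ⟨hk1.le, fun t ht0 ht1 => ?_⟩
  have := abs_div_sub_le_of_expansions hC ht0 ht1 hm0 hm1 (hfk t ht0 ht1) hG hG2 hk1.le
  rw [hratio, one_div_mul_eq_div]
  refine ⟨this, ?_⟩
  linarith [(abs_le.1 this).1, hkd (t - 1 / p) (abs_le.2 ⟨by linarith, by linarith⟩)]

/-- Theorem 2.1, mutual contiguity.
`U` is the uniform (rotation-invariant) probability measure on the unit sphere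
`S^{p-1} ⊆ ℝ^p`, `f ∈ 𝓕`, `θ ∈ S^{p-1}`, and `(κ_n)` is a sequence of nonzero reals with
`κ_n = O(1/√n)`.  Then for every sequence of measurable sets `A_n`,
`P_0^{(n)}(A_n) → 0` iff `P^{(n)}_{θ,κ_n,f}(A_n) → 0`. -/
theorem contiguity_of_axial_alternatives
    (p : ℕ) (hp : 2 ≤ p)
    (U : Measure (Fin p → ℝ)) [IsProbabilityMeasure U]
    (hUsphere : U {x : Fin p → ℝ | ∑ a, x a ^ 2 = 1}ᶜ = 0)
    (hUrot : ∀ O : Matrix (Fin p) (Fin p) ℝ, O * Oᵀ = 1 →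
      Measure.map (fun x => O.mulVec x) U = U)
    (θ : Fin p → ℝ) (hθ : ∑ a, θ a ^ 2 = 1)
    (f : ℝ → ℝ) (hf_pos : ∀ x, 0 < f x) (hf_mono : Monotone f)
    (hf_diff : ∀ᶠ x in 𝓝 (0:ℝ), DifferentiableAt ℝ f x)
    (hf_diff2 : DifferentiableAt ℝ (deriv f) 0)
    (hf0 : f 0 = 1) (hf'0 : deriv f 0 = 1)
    (κ : ℕ → ℝ) (hκ0 : ∀ n, κ n ≠ 0)
    (hκO : (fun n => κ n) =O[atTop] (fun n : ℕ => 1 / Real.sqrt n))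
    (A : ∀ n : ℕ, Set (Fin n → (Fin p → ℝ)))
    (hA : ∀ n, MeasurableSet (A n)) :
    Tendsto (fun n => Measure.pi (fun _ : Fin n => U) (A n)) atTop (𝓝 (0 : ℝ≥0∞)) ↔
      Tendsto (fun n => Measure.pi (fun _ : Fin n =>
          U.withDensity (fun x => ENNReal.ofReal
            ((cKF p (κ n) f / c0 p) * f (κ n * (∑ a, x a * θ a) ^ 2)))) (A n))
        atTop (𝓝 (0 : ℝ≥0∞)) := by
  set m : ℝ := 1 / p with hm
  have hp' : (1 : ℝ) ≤ p := by exact_mod_cast (by lia : 1 ≤ p)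
  have hm0 : 0 ≤ m := by positivity
  have hm1 : m ≤ 1 := (div_le_one (by linarith)).2 hp'
  obtain ⟨hTint, hTm⟩ :=
    integrable_and_integral_sq_of_rotation_invariant (by lia) hUsphere hUrot hθ
  have hT1 : ∀ᵐ x ∂U, (∑ a, x a * θ a) ^ 2 ≤ 1 := by
    have hS : ∀ᵐ x ∂U, ∑ a, x a ^ 2 = 1 := hUsphere
    filter_upwards [hS] with x hx
    simpa [hx, hθ] using Finset.sum_mul_sq_le_sq_mul_sq Finset.univ x θ
  obtain ⟨K, hK, hexp⟩ :=
    exists_likelihood_ratio_expansion hp hf_mono hf_diff hf_diff2 hf0 hf'0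
  set B := 2 * K + 2 * (1 + K) ^ 2 with hB
  have hB0 : 0 ≤ B := by positivity
  obtain ⟨c, hc⟩ := hκO.bound
  have hκlim : Tendsto κ atTop (𝓝 0) := hκO.trans_tendsto
    (tendsto_const_nhds.div_atTop (Real.tendsto_sqrt_atTop.comp tendsto_natCast_atTop_atTop))
  set ρ : ℕ → (Fin p → ℝ) → ℝ := fun n x =>
    (cKF p (κ n) f / c0 p) * f (κ n * (∑ a, x a * θ a) ^ 2) with hρ
  have hρm : ∀ n, Measurable (ρ n) := fun n => by
    have := hf_mono.measurable
    fun_prop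
  have hev : ∀ᶠ n in atTop, (∀ x, 0 < ρ n x) ∧ n * (B * κ n ^ 2) ≤ B * c ^ 2 ∧
      ∀ᵐ x ∂U, ρ n x ^ 2 ≤ 1 + 2 * κ n * ((∑ a, x a * θ a) ^ 2 - m) + B * κ n ^ 2 ∧
        (ρ n x)⁻¹ ≤ 1 + -κ n * ((∑ a, x a * θ a) ^ 2 - m) + B * κ n ^ 2 := by
    filter_upwards [hκlim.eventually hexp, hc, eventually_gt_atTop 0] with n hn hcn hn0
    obtain ⟨hk1, hn⟩ := hn
    refine ⟨fun x => ?_, ?_, ?_⟩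
    · have h0 := (hn 0 le_rfl zero_le_one).2
      rw [mul_zero, hf0, mul_one] at h0
      exact mul_pos (by linarith) (hf_pos _)
    · have hn' : (0 : ℝ) < n := by exact_mod_cast hn0
      have h1 : κ n ^ 2 ≤ c ^ 2 * (1 / n) := by
        rw [← sq_abs]
        calc |κ n| ^ 2 ≤ (c * ‖1 / Real.sqrt n‖) ^ 2 := pow_le_pow_left₀ (abs_nonneg _) hcn 2
          _ = c ^ 2 * (1 / n) := by
            rw [mul_pow, Real.norm_eq_abs, sq_abs, div_pow, one_pow, Real.sq_sqrt hn'.le]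
      calc n * (B * κ n ^ 2) ≤ n * (B * (c ^ 2 * (1 / n))) := by gcongr
        _ = B * c ^ 2 := by field_simp
    · filter_upwards [hT1] with x hx
      obtain ⟨h1, h2⟩ := hn _ (sq_nonneg (∑ a, x a * θ a)) hx
      exact sq_and_inv_le_of_expansion hK
        (abs_le.2 ⟨by linarith [sq_nonneg (∑ a, x a * θ a)], by linarith⟩) h1 hk1 h2
  have hMtop : ENNReal.ofReal (Real.exp (B * c ^ 2)) ≠ ∞ := ENNReal.ofReal_ne_top
  constructor
  · refine tendsto_zero_of_sq_le_mul hMtop ?_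
    filter_upwards [hev] with n hn
    obtain ⟨hpos, hnB, hle⟩ := hn
    refine (sq_pi_withDensity_le U (hρm n).ennreal_ofReal (hA n)).trans ?_
    gcongr
    refine le_trans ?_ (ofReal_one_add_pow_le (by positivity) hnB)
    gcongr
    simp_rw [← ENNReal.ofReal_pow (hpos _).le]
    exact lintegral_ofReal_le_of_le_affine hTint hTm (fun x => sq_nonneg _)
      (hle.mono fun x hx => hx.1)
  · refine tendsto_zero_of_sq_le_mul hMtop ?_
    filter_upwards [hev] with n hn
    obtain ⟨hpos, hnB, hle⟩ := hn
    refine (sq_pi_le_withDensity U (hρm n).ennreal_ofReal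
      (fun x => (ENNReal.ofReal_pos.2 (hpos x)).ne') (fun x => ENNReal.ofReal_ne_top)
      (hA n)).trans ?_
    gcongr
    refine le_trans ?_ (ofReal_one_add_pow_le (by positivity) hnB)
    gcongr
    simp_rw [← ENNReal.ofReal_inv_of_pos (hpos _)]
    exact lintegral_ofReal_le_of_le_affine hTint hTm (fun x => (inv_pos.2 (hpos x)).le)
      (hle.mono fun x hx => hx.2)

end
end

section
/- Let p = 2. Under the null hypothesis of uniformity, i.e., under P_0^{(n)} = U_2^{⊗n} on (S^1)^n, each of the test statistics T_+^{(n)}(x) := √n (2 λ̂_{n1}(x) − 1), T_−^{(n)}(x) := −√n (2 λ̂_{n2}(x) − 1), and T_±^{(n)}(x) := max( |2 λ̂_{n1}(x) − 1|, |2 λ̂_{n2}(x) − 1| ) · √n converges in distribution, as n → ∞, to the probability distribution on ℝ with cumulative distribution function ℓ ↦ (1 − exp(−ℓ²)) · 1[ℓ > 0]. -/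
open MeasureTheory ProbabilityTheory Filter Matrix Real
open scoped ENNReal NNReal Topology

noncomputable section

/-- The sample covariance matrix `S_n(x) = (1/n) Σ_i x_i x_i'`. -/
def Sn (p n : ℕ) (x : Fin n → (Fin p → ℝ)) : Matrix (Fin p) (Fin p) ℝ :=
  Matrix.of fun a b => (1 / (n:ℝ)) * ∑ i, x i a * x i b

/-- Largest eigenvalue of a (symmetric) real matrix, via the Rayleigh quotient. -/
def maxEig {p : ℕ} (A : Matrix (Fin p) (Fin p) ℝ) : ℝ :=
  sSup {r | ∃ v : Fin p → ℝ, (∑ i, v i ^ 2) = 1 ∧ r = v ⬝ᵥ A.mulVec v}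

/-- Smallest eigenvalue of a (symmetric) real matrix, via the Rayleigh quotient. -/
def minEig {p : ℕ} (A : Matrix (Fin p) (Fin p) ℝ) : ℝ :=
  sInf {r | ∃ v : Fin p → ℝ, (∑ i, v i ^ 2) = 1 ∧ r = v ⬝ᵥ A.mulVec v}

/-- The centred Gaussian law on `ℂ` with density `π⁻¹ exp(-|z|²)`. -/
def complexGaussian : Measure ℂ :=
  volume.withDensity fun z => ENNReal.ofReal (Real.pi⁻¹ * Real.exp (-‖z‖ ^ 2))

lemma integrable_exp_neg_norm_sq : Integrable fun z : ℂ => Real.exp (-‖z‖ ^ 2) := by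
  have h := (GaussianFourier.integrable_cexp_neg_mul_sq_norm_add (V := ℂ) (b := 1) (by simp)
    0 0).norm
  refine h.congr (ae_of_all _ fun z => ?_)
  simp [Complex.norm_exp, ← Complex.ofReal_pow]

lemma complexGaussian_apply {s : Set ℂ} (hs : MeasurableSet s) :
    complexGaussian s =
      ENNReal.ofReal (∫ z in s, Real.pi⁻¹ * Real.exp (-‖z‖ ^ 2)) := by
  rw [complexGaussian, withDensity_apply _ hs, ofReal_integral_eq_lintegral_ofReal]
  · exact (integrable_exp_neg_norm_sq.const_mul _).restrict
  · exact ae_of_all _ fun z => by positivity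

instance isProbabilityMeasure_complexGaussian : IsProbabilityMeasure complexGaussian := by
  constructor
  have h := GaussianFourier.integral_rexp_neg_mul_sq_norm (V := ℂ) (b := 1) one_pos
  simp only [neg_mul, one_mul, div_one, Complex.finrank_real_complex, Nat.cast_ofNat,
    div_self (two_ne_zero' ℝ), Real.rpow_one] at h
  rw [complexGaussian_apply MeasurableSet.univ, setIntegral_univ, integral_const_mul, h,
    inv_mul_cancel₀ Real.pi_ne_zero, ENNReal.ofReal_one]

lemma charFun_complexGaussian (t : ℂ) :
    charFun complexGaussian t = Complex.exp (-(‖t‖ : ℂ) ^ 2 / 4) := by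
  have h := GaussianFourier.integral_cexp_neg_mul_sq_norm_add (V := ℂ) (b := 1) (by simp)
    Complex.I t
  rw [charFun_apply, complexGaussian, integral_withDensity_eq_integral_toReal_smul₀
    (by fun_prop) (ae_of_all _ fun z => ENNReal.ofReal_lt_top)]
  have key : ∀ z : ℂ, (ENNReal.ofReal (Real.pi⁻¹ * Real.exp (-‖z‖ ^ 2))).toReal •
      Complex.exp (inner ℝ z t * Complex.I) = (Real.pi : ℂ)⁻¹ *
        Complex.exp (-1 * (‖z‖ : ℂ) ^ 2 + Complex.I * (inner ℝ t z : ℝ)) := by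
    intro z
    rw [ENNReal.toReal_ofReal (by positivity), Complex.real_smul, Complex.exp_add,
      real_inner_comm]
    push_cast
    ring_nf
  simp_rw [key]
  rw [integral_const_mul, h]
  simp only [Complex.finrank_real_complex, Nat.cast_ofNat, div_self (two_ne_zero' ℂ),
    Complex.cpow_one, div_one, Complex.I_sq]
  rw [← mul_assoc, inv_mul_cancel₀ (by exact_mod_cast Real.pi_ne_zero)]
  ring_nf

lemma complexGaussian_closedBall (l : ℝ) :
    (complexGaussian (Metric.closedBall 0 l)).toReal =
      if 0 < l then 1 - Real.exp (-l ^ 2) else 0 := by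
  rw [complexGaussian_apply Metric.isClosed_closedBall.measurableSet,
    ENNReal.toReal_ofReal (integral_nonneg fun z => by positivity)]
  rw [← integral_indicator Metric.isClosed_closedBall.measurableSet]
  have h := integral_fun_norm_addHaar (volume : Measure ℂ)
    ((Set.Iic l).indicator fun r => Real.pi⁻¹ * Real.exp (-r ^ 2))
  have e : ∀ z : ℂ, (Metric.closedBall (0 : ℂ) l).indicator
      (fun z => Real.pi⁻¹ * Real.exp (-‖z‖ ^ 2)) z =
        (Set.Iic l).indicator (fun r => Real.pi⁻¹ * Real.exp (-r ^ 2)) ‖z‖ := by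
    intro z
    by_cases hz : ‖z‖ ≤ l
    · rw [Set.indicator_of_mem (by simpa using hz), Set.indicator_of_mem (by simpa using hz)]
    · rw [Set.indicator_of_notMem (by simpa using hz),
        Set.indicator_of_notMem (by simpa using hz)]
  simp_rw [e]
  rw [h]
  have e2 : ∀ r : ℝ, r ^ (Module.finrank ℝ ℂ - 1) •
      (Set.Iic l).indicator (fun r => Real.pi⁻¹ * Real.exp (-r ^ 2)) r =
        (Set.Iic l).indicator (fun r => r * (Real.pi⁻¹ * Real.exp (-r ^ 2))) r := by
    intro r
    by_cases hr : r ∈ Set.Iic l <;> simp [hr]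
  simp_rw [e2]
  rw [setIntegral_indicator measurableSet_Iic, Set.Ioi_inter_Iic]
  split_ifs with hl
  · rw [← intervalIntegral.integral_of_le hl.le]
    have hd : ∀ r ∈ Set.uIcc 0 l, HasDerivAt
        (fun r : ℝ => -(Real.pi⁻¹ / 2) * Real.exp (-r ^ 2))
        (r * (Real.pi⁻¹ * Real.exp (-r ^ 2))) r := by
      intro r _
      have := (((hasDerivAt_id r).pow 2).neg.exp).const_mul (-(Real.pi⁻¹ / 2))
      refine (this.congr_deriv ?_)
      simp
      ring
    rw [intervalIntegral.integral_eq_sub_of_hasDerivAt hd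
      (Continuous.intervalIntegrable (by fun_prop) _ _)]
    simp [measureReal_def]
    field_simp
    ring
  · simp [Set.Ioc_eq_empty hl]

lemma complexGaussian_frontier_closedBall (l : ℝ) :
    complexGaussian (frontier (Metric.closedBall 0 l)) = 0 :=
  withDensity_absolutelyContinuous _ _ <|
    (convex_closedBall (0 : ℂ) l).addHaar_frontier volume

/-- The square `(x₀ + i x₁)²` of a planar vector, seen as a complex number. -/
def planarSq (x : Fin 2 → ℝ) : ℂ := ⟨x 0 ^ 2 - x 1 ^ 2, 2 * (x 0 * x 1)⟩

lemma measurable_planarSq : Measurable planarSq := by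
  have : planarSq = fun x => ((x 0 ^ 2 - x 1 ^ 2 : ℝ) : ℂ) +
      ((2 * (x 0 * x 1) : ℝ) : ℂ) * Complex.I :=
    funext fun x => Complex.mk_eq_add_mul_I _ _
  rw [this]
  fun_prop

lemma norm_planarSq {x : Fin 2 → ℝ} (hx : ∑ a, x a ^ 2 = 1) : ‖planarSq x‖ = 1 := by
  rw [Fin.sum_univ_two] at hx
  have : ‖planarSq x‖ ^ 2 = 1 := by
    rw [← Complex.normSq_eq_norm_sq, Complex.normSq_apply]
    simp only [planarSq]
    linear_combination (x 0 ^ 2 + x 1 ^ 2 + 1) * hx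
  exact (pow_eq_one_iff_of_nonneg (norm_nonneg _) two_ne_zero).1 this

lemma exists_planarSq_eq {w : ℂ} (hw : ‖w‖ = 1) :
    ∃ v : Fin 2 → ℝ, ∑ a, v a ^ 2 = 1 ∧ planarSq v = w := by
  obtain ⟨z, hz⟩ := IsAlgClosed.exists_pow_nat_eq w two_pos
  have h1 : ‖z‖ ^ 2 = 1 := by rw [← norm_pow, hz, hw]
  rw [← Complex.normSq_eq_norm_sq, Complex.normSq_apply] at h1
  refine ⟨![z.re, z.im], ?_, ?_⟩
  · simp
    linarith
  · rw [← hz]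
    apply Complex.ext
    · simp [planarSq, pow_two]
    · simp [planarSq, pow_two]
      ring

lemma exists_inner_planarSq_eq_norm (M : ℂ) :
    ∃ v : Fin 2 → ℝ, ∑ a, v a ^ 2 = 1 ∧ inner ℝ (planarSq v) M = ‖M‖ := by
  by_cases hM : M = 0
  · exact ⟨![1, 0], by simp, by simp [hM]⟩
  · have hM' : ‖M‖ ≠ 0 := norm_ne_zero_iff.2 hM
    obtain ⟨v, hv, hvM⟩ := exists_planarSq_eq (w := (‖M‖⁻¹ : ℝ) • M) (by
      rw [norm_smul, norm_inv, norm_norm, inv_mul_cancel₀ hM'])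
    refine ⟨v, hv, ?_⟩
    rw [hvM, real_inner_smul_left, real_inner_self_eq_norm_sq]
    field_simp

lemma quadForm_Sn {n : ℕ} (hn : n ≠ 0) {x : Fin n → Fin 2 → ℝ}
    (hx : ∀ i, ∑ a, x i a ^ 2 = 1) {v : Fin 2 → ℝ} (hv : ∑ a, v a ^ 2 = 1) :
    v ⬝ᵥ (Sn 2 n x).mulVec v =
      (1 + inner ℝ (planarSq v) ((n : ℝ)⁻¹ • ∑ i, planarSq (x i))) / 2 := by
  have hn' : (n : ℝ) ≠ 0 := by exact_mod_cast hn
  have h1 : ∀ i, 2 * (v 0 * x i 0 + v 1 * x i 1) ^ 2 =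
      1 + inner ℝ (planarSq v) (planarSq (x i)) := by
    intro i
    have h := hx i
    rw [Fin.sum_univ_two] at h hv
    rw [Complex.inner]
    simp [planarSq]
    linear_combination (x i 0 ^ 2 + x i 1 ^ 2) * hv + h
  have h2 : v ⬝ᵥ (Sn 2 n x).mulVec v =
      (n : ℝ)⁻¹ * ∑ i, (v 0 * x i 0 + v 1 * x i 1) ^ 2 := by
    simp only [dotProduct, mulVec, Fin.sum_univ_two, Sn, Matrix.of_apply, one_div]
    have : ∀ i, (v 0 * x i 0 + v 1 * x i 1) ^ 2 = v 0 * v 0 * (x i 0 * x i 0) +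
      v 0 * v 1 * (x i 0 * x i 1) + v 0 * v 1 * (x i 1 * x i 0) +
        v 1 * v 1 * (x i 1 * x i 1) := fun i => by ring
    simp_rw [this, Finset.sum_add_distrib, ← Finset.mul_sum]
    ring
  have h3 : 2 * ∑ i, (v 0 * x i 0 + v 1 * x i 1) ^ 2 =
      n + ∑ i, inner ℝ (planarSq v) (planarSq (x i)) := by
    rw [Finset.mul_sum, Finset.sum_congr rfl fun i _ => h1 i, Finset.sum_add_distrib]
    simp
  rw [h2, real_inner_smul_right, inner_sum]
  field_simp
  linarith

lemma two_mul_maxEig_Sn_sub_one {n : ℕ} (hn : n ≠ 0) {x : Fin n → Fin 2 → ℝ}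
    (hx : ∀ i, ∑ a, x i a ^ 2 = 1) :
    2 * maxEig (Sn 2 n x) - 1 = ‖(n : ℝ)⁻¹ • ∑ i, planarSq (x i)‖ := by
  have : IsGreatest {r | ∃ v : Fin 2 → ℝ, (∑ i, v i ^ 2) = 1 ∧
      r = v ⬝ᵥ (Sn 2 n x).mulVec v} ((1 + ‖(n : ℝ)⁻¹ • ∑ i, planarSq (x i)‖) / 2) := by
    constructor
    · obtain ⟨v, hv, hvM⟩ := exists_inner_planarSq_eq_norm ((n : ℝ)⁻¹ • ∑ i, planarSq (x i))
      exact ⟨v, hv, by rw [quadForm_Sn hn hx hv, hvM]⟩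
    · rintro r ⟨v, hv, rfl⟩
      rw [quadForm_Sn hn hx hv]
      have := real_inner_le_norm (planarSq v) ((n : ℝ)⁻¹ • ∑ i, planarSq (x i))
      rw [norm_planarSq hv] at this
      linarith
  rw [maxEig, this.csSup_eq]
  ring

lemma two_mul_minEig_Sn_sub_one {n : ℕ} (hn : n ≠ 0) {x : Fin n → Fin 2 → ℝ}
    (hx : ∀ i, ∑ a, x i a ^ 2 = 1) :
    2 * minEig (Sn 2 n x) - 1 = -‖(n : ℝ)⁻¹ • ∑ i, planarSq (x i)‖ := by
  have : IsLeast {r | ∃ v : Fin 2 → ℝ, (∑ i, v i ^ 2) = 1 ∧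
      r = v ⬝ᵥ (Sn 2 n x).mulVec v} ((1 - ‖(n : ℝ)⁻¹ • ∑ i, planarSq (x i)‖) / 2) := by
    constructor
    · obtain ⟨v, hv, hvM⟩ := exists_inner_planarSq_eq_norm (-((n : ℝ)⁻¹ • ∑ i, planarSq (x i)))
      rw [inner_neg_right, norm_neg] at hvM
      exact ⟨v, hv, by rw [quadForm_Sn hn hx hv]; linarith⟩
    · rintro r ⟨v, hv, rfl⟩
      rw [quadForm_Sn hn hx hv]
      have := neg_le_of_abs_le
        (abs_real_inner_le_norm (planarSq v) ((n : ℝ)⁻¹ • ∑ i, planarSq (x i)))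
      rw [norm_planarSq hv] at this
      linarith
  rw [minEig, this.csInf_eq]
  ring

/-- The normalised sum `n^{-1/2} ∑ (x_{i0} + i x_{i1})²`. -/
def planarSqSum (n : ℕ) (x : Fin n → Fin 2 → ℝ) : ℂ :=
  (√n)⁻¹ • ∑ i, planarSq (x i)

lemma measurable_planarSqSum (n : ℕ) : Measurable (planarSqSum n) := by
  have := measurable_planarSq
  unfold planarSqSum
  fun_prop

lemma sqrt_mul_norm_mean_planarSq {n : ℕ} (x : Fin n → Fin 2 → ℝ) :
    √n * ‖(n : ℝ)⁻¹ • ∑ i, planarSq (x i)‖ = ‖planarSqSum n x‖ := by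
  rw [planarSqSum, norm_smul, norm_smul, ← mul_assoc, norm_inv, norm_inv,
    Real.norm_of_nonneg (Real.sqrt_nonneg _), Real.norm_of_nonneg (Nat.cast_nonneg n)]
  congr 1
  rw [← div_eq_mul_inv, Real.sqrt_div_self]

section

variable {U : Measure (Fin 2 → ℝ)}

lemma integral_inner_planarSq
    (hUrot : ∀ O : Matrix (Fin 2) (Fin 2) ℝ, O * Oᵀ = 1 →
      Measure.map (fun x => O.mulVec x) U = U) (t : ℂ) :
    ∫ x, inner ℝ (planarSq x) t ∂U = 0 := by
  have hm : Measurable fun x => inner ℝ (planarSq x) t := measurable_planarSq.inner_const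
  have hR := hUrot !![0, -1; 1, 0] (by ext i j; fin_cases i <;> fin_cases j <;> simp [Matrix.mul_apply])
  have h := integral_map (μ := U) (φ := fun x => !![0, -1; 1, 0].mulVec x)
    (by fun_prop) (f := fun x => inner ℝ (planarSq x) t) hm.aestronglyMeasurable
  rw [hR] at h
  have e : ∀ x, planarSq (!![0, -1; 1, 0].mulVec x) = -planarSq x := by
    intro x
    apply Complex.ext <;> simp [planarSq, mulVec, dotProduct, Fin.sum_univ_two, mul_comm]
  simp only [e, inner_neg_left, integral_neg] at h
  linarith

variable [IsProbabilityMeasure U]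

lemma integral_inner_planarSq_sq
    (hUsphere : U {x : Fin 2 → ℝ | ∑ a, x a ^ 2 = 1}ᶜ = 0)
    (hUrot : ∀ O : Matrix (Fin 2) (Fin 2) ℝ, O * Oᵀ = 1 →
      Measure.map (fun x => O.mulVec x) U = U) (t : ℂ) :
    ∫ x, (inner ℝ (planarSq x) t) ^ 2 ∂U = ‖t‖ ^ 2 / 2 := by
  have hs : ∀ᵐ x ∂U, ∑ a, x a ^ 2 = 1 := hUsphere
  have hm : ∀ t, Measurable fun x => inner ℝ (planarSq x) t ^ 2 := fun t =>
    (measurable_planarSq.inner_const).pow_const 2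
  have hi : ∀ t, Integrable (fun x => inner ℝ (planarSq x) t ^ 2) U := by
    intro t
    refine Integrable.of_bound (hm t).aestronglyMeasurable (‖t‖ ^ 2) ?_
    filter_upwards [hs] with x hx
    rw [norm_pow]
    have := norm_inner_le_norm (𝕜 := ℝ) (planarSq x) t
    rw [norm_planarSq hx, one_mul] at this
    gcongr
  set c : ℝ := √2 / 2 with hc
  have hcc : c * c = 1 / 2 := by
    have := Real.mul_self_sqrt (show (0 : ℝ) ≤ 2 by norm_num)
    rw [hc]
    linarith
  have hR := hUrot !![c, -c; c, c] (by
    ext i j; fin_cases i <;> fin_cases j <;>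
      simp [Matrix.mul_apply, hcc] <;> norm_num)
  have h := integral_map (μ := U) (φ := fun x => !![c, -c; c, c].mulVec x)
    (by fun_prop) (f := fun x => inner ℝ (planarSq x) t ^ 2) (hm t).aestronglyMeasurable
  rw [hR] at h
  have e : ∀ x, inner ℝ (planarSq (!![c, -c; c, c].mulVec x)) t =
      inner ℝ (planarSq x) (-Complex.I * t) := by
    intro x
    rw [Complex.inner, Complex.inner]
    simp [planarSq, mulVec, dotProduct, Fin.sum_univ_two]
    linear_combination (-4 * t.re * x 0 * x 1 + 2 * t.im * (x 0 ^ 2 - x 1 ^ 2)) * hcc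
  simp only [e] at h
  have hsum : ∫ x, (inner ℝ (planarSq x) t ^ 2 + inner ℝ (planarSq x) (-Complex.I * t) ^ 2) ∂U
      = ‖t‖ ^ 2 := by
    have : (fun x => inner ℝ (planarSq x) t ^ 2 + inner ℝ (planarSq x) (-Complex.I * t) ^ 2)
        =ᵐ[U] fun _ => ‖t‖ ^ 2 := by
      filter_upwards [hs] with x hx
      have h1 := norm_planarSq hx
      have h2 : Complex.normSq (planarSq x) = 1 := by
        rw [Complex.normSq_eq_norm_sq, h1, one_pow]
      rw [Complex.normSq_apply] at h2
      rw [← Complex.normSq_eq_norm_sq, Complex.normSq_apply, Complex.inner, Complex.inner]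
      simp
      linear_combination (t.re ^ 2 + t.im ^ 2) * h2
    rw [integral_congr_ae this]
    simp
  rw [integral_add (hi _) (hi _)] at hsum
  linarith

lemma charFun_map_planarSqSum (n : ℕ) (t : ℂ) :
    charFun ((Measure.pi fun _ : Fin n => U).map (planarSqSum n)) t =
      (charFun (U.map planarSq) ((√n)⁻¹ • t)) ^ n := by
  rw [charFun_apply, charFun_apply,
    integral_map (measurable_planarSqSum n).aemeasurable (by fun_prop),
    integral_map measurable_planarSq.aemeasurable (by fun_prop)]
  have := integral_fintype_prod_eq_pow (ι := Fin n) (μ := U)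
    fun x => Complex.exp (inner ℝ (planarSq x) ((√n)⁻¹ • t) * Complex.I)
  rw [Fintype.card_fin] at this
  rw [← this]
  congr 1
  ext x
  rw [← Complex.exp_sum, ← Finset.sum_mul, planarSqSum, real_inner_smul_left, sum_inner]
  simp_rw [real_inner_smul_right, ← Complex.ofReal_sum, ← Finset.mul_sum]

lemma tendsto_charFun_map_planarSqSum
    (hUsphere : U {x : Fin 2 → ℝ | ∑ a, x a ^ 2 = 1}ᶜ = 0)
    (hUrot : ∀ O : Matrix (Fin 2) (Fin 2) ℝ, O * Oᵀ = 1 →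
      Measure.map (fun x => O.mulVec x) U = U) (t : ℂ) :
    Tendsto (fun n : ℕ => charFun ((Measure.pi fun _ : Fin n => U).map (planarSqSum n)) t) atTop
      (𝓝 (Complex.exp (-(‖t‖ : ℂ) ^ 2 / 4))) := by
  by_cases ht : t = 0
  · have := measurable_planarSq
    have hp : IsProbabilityMeasure (U.map planarSq) :=
      Measure.isProbabilityMeasure_map this.aemeasurable
    simp_rw [charFun_map_planarSqSum]
    simp [ht]
  have ht' : ‖t‖ ≠ 0 := norm_ne_zero_iff.2 ht
  set s : ℝ := ‖t‖ / √2 with hs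
  have h2 : √2 ^ 2 = 2 := Real.sq_sqrt (by norm_num)
  have hs2 : s ^ 2 = ‖t‖ ^ 2 / 2 := by rw [hs, div_pow, h2]
  have hs0 : s ≠ 0 := by positivity
  have hm : Measurable fun x => s⁻¹ * inner ℝ (planarSq x) t :=
    (measurable_planarSq.inner_const).const_mul _
  have key := tendsto_charFun_inv_sqrt_mul_pow (P := U)
    (X := fun x => s⁻¹ * inner ℝ (planarSq x) t) hm.aemeasurable
    (by rw [integral_const_mul, integral_inner_planarSq hUrot, mul_zero])
    (by
      simp only [Pi.pow_apply, mul_pow]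
      rw [integral_const_mul, integral_inner_planarSq_sq hUsphere hUrot, ← hs2, ← mul_pow,
        inv_mul_cancel₀ hs0, one_pow]) s
  have e : ∀ n : ℕ, charFun (U.map fun x => s⁻¹ * inner ℝ (planarSq x) t) ((√n)⁻¹ * s) =
      charFun (U.map planarSq) ((√n)⁻¹ • t) := by
    intro n
    rw [charFun_apply, charFun_apply, integral_map hm.aemeasurable (by fun_prop),
      integral_map measurable_planarSq.aemeasurable (by fun_prop)]
    congr 1
    ext x
    rw [real_inner_smul_right]
    have : inner ℝ (s⁻¹ * inner ℝ (planarSq x) t) ((√n)⁻¹ * s) =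
        (√n)⁻¹ * inner ℝ (planarSq x) t := by
      simp
      field_simp
    rw [this]
  simp_rw [charFun_map_planarSqSum, ← e]
  convert key using 3
  rw [← Complex.ofReal_pow, ← Complex.ofReal_pow, hs2]
  push_cast
  ring

lemma tendsto_measure_norm_planarSqSum_le
    (hUsphere : U {x : Fin 2 → ℝ | ∑ a, x a ^ 2 = 1}ᶜ = 0)
    (hUrot : ∀ O : Matrix (Fin 2) (Fin 2) ℝ, O * Oᵀ = 1 →
      Measure.map (fun x => O.mulVec x) U = U) (l : ℝ) :
    Tendsto (fun n : ℕ => ((Measure.pi fun _ : Fin n => U) {x | ‖planarSqSum n x‖ ≤ l}).toReal)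
      atTop (𝓝 (if 0 < l then 1 - Real.exp (-l ^ 2) else 0)) := by
  let μ : ℕ → ProbabilityMeasure ℂ := fun n =>
    ⟨(Measure.pi fun _ : Fin n => U).map (planarSqSum n),
      Measure.isProbabilityMeasure_map (measurable_planarSqSum n).aemeasurable⟩
  let ν : ProbabilityMeasure ℂ := ⟨complexGaussian, inferInstance⟩
  have hμ : Tendsto μ atTop (𝓝 ν) := by
    refine ProbabilityMeasure.tendsto_iff_tendsto_charFun.2 fun t => ?_
    change Tendsto _ _ (𝓝 (charFun complexGaussian t))
    rw [charFun_complexGaussian]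
    exact tendsto_charFun_map_planarSqSum hUsphere hUrot t
  have h := ProbabilityMeasure.tendsto_measure_of_null_frontier_of_tendsto' hμ
    (complexGaussian_frontier_closedBall l)
  have h' := (ENNReal.tendsto_toReal (measure_ne_top _ _)).comp h
  change Tendsto _ _ (𝓝 (complexGaussian (Metric.closedBall 0 l)).toReal) at h'
  rw [complexGaussian_closedBall] at h'
  refine h'.congr fun n => ?_
  change (((Measure.pi fun _ : Fin n => U).map (planarSqSum n)) _).toReal = _
  rw [Measure.map_apply (measurable_planarSqSum n) Metric.isClosed_closedBall.measurableSet]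
  congr 2
  ext x
  simp

lemma tendsto_measure_le_of_eq_norm_planarSqSum
    (hUsphere : U {x : Fin 2 → ℝ | ∑ a, x a ^ 2 = 1}ᶜ = 0)
    (hUrot : ∀ O : Matrix (Fin 2) (Fin 2) ℝ, O * Oᵀ = 1 →
      Measure.map (fun x => O.mulVec x) U = U)
    (T : (n : ℕ) → (Fin n → Fin 2 → ℝ) → ℝ)
    (hT : ∀ n ≠ 0, ∀ x : Fin n → Fin 2 → ℝ, (∀ i, ∑ a, x i a ^ 2 = 1) →
      T n x = ‖planarSqSum n x‖) (l : ℝ) :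
    Tendsto (fun n : ℕ => ((Measure.pi fun _ : Fin n => U) {x | T n x ≤ l}).toReal)
      atTop (𝓝 (if 0 < l then 1 - Real.exp (-l ^ 2) else 0)) := by
  refine (tendsto_measure_norm_planarSqSum_le hUsphere hUrot l).congr' ?_
  filter_upwards [eventually_ne_atTop 0] with n hn
  have hs : ∀ᵐ x ∂U, ∑ a, x a ^ 2 = 1 := hUsphere
  have hs' : ∀ᵐ x ∂(Measure.pi fun _ : Fin n => U), ∀ i, ∑ a, x i a ^ 2 = 1 :=
    ae_all_iff.2 fun i => (Measure.tendsto_eval_ae_ae (μ := fun _ : Fin n => U)).eventually hs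
  congr 1
  refine measure_congr ?_
  filter_upwards [hs'] with x hx
  refine propext ?_
  change ‖planarSqSum n x‖ ≤ l ↔ T n x ≤ l
  rw [hT n hn x hx]

end

/-- Corollary 5.1(i), case `p = 2`.
Under uniformity on `S¹`, each of `T_+^{(n)} = √n(2λ̂_{n1}-1)`, `T_-^{(n)} = -√n(2λ̂_{n2}-1)`,
and `T_±^{(n)} = √n max(|2λ̂_{n1}-1|, |2λ̂_{n2}-1|)` converges in distribution to the law with
cdf `ℓ ↦ (1 - exp(-ℓ²)) 1[ℓ > 0]` (the cdf is continuous, so cdf convergence holds at every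
point). -/
theorem circle_extreme_eigenvalue_statistics_null_limit
    (U : Measure (Fin 2 → ℝ)) [IsProbabilityMeasure U]
    (hUsphere : U {x : Fin 2 → ℝ | ∑ a, x a ^ 2 = 1}ᶜ = 0)
    (hUrot : ∀ O : Matrix (Fin 2) (Fin 2) ℝ, O * Oᵀ = 1 →
      Measure.map (fun x => O.mulVec x) U = U) :
    (∀ ℓ : ℝ,
      Tendsto (fun n => ((Measure.pi (fun _ : Fin n => U))
          {x | Real.sqrt n * (2 * maxEig (Sn 2 n x) - 1) ≤ ℓ}).toReal) atTop
        (𝓝 (if 0 < ℓ then 1 - Real.exp (-ℓ ^ 2) else 0))) ∧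
    (∀ ℓ : ℝ,
      Tendsto (fun n => ((Measure.pi (fun _ : Fin n => U))
          {x | -(Real.sqrt n * (2 * minEig (Sn 2 n x) - 1)) ≤ ℓ}).toReal) atTop
        (𝓝 (if 0 < ℓ then 1 - Real.exp (-ℓ ^ 2) else 0))) ∧
    (∀ ℓ : ℝ,
      Tendsto (fun n => ((Measure.pi (fun _ : Fin n => U))
          {x | Real.sqrt n * max |2 * maxEig (Sn 2 n x) - 1| |2 * minEig (Sn 2 n x) - 1| ≤ ℓ}).toReal)
        atTop (𝓝 (if 0 < ℓ then 1 - Real.exp (-ℓ ^ 2) else 0))) := by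
  refine ⟨tendsto_measure_le_of_eq_norm_planarSqSum hUsphere hUrot _ fun n hn x hx => ?_,
    tendsto_measure_le_of_eq_norm_planarSqSum hUsphere hUrot _ fun n hn x hx => ?_,
    tendsto_measure_le_of_eq_norm_planarSqSum hUsphere hUrot _ fun n hn x hx => ?_⟩
  · rw [two_mul_maxEig_Sn_sub_one hn hx, sqrt_mul_norm_mean_planarSq]
  · rw [two_mul_minEig_Sn_sub_one hn hx, mul_neg, neg_neg, sqrt_mul_norm_mean_planarSq]
  · rw [two_mul_maxEig_Sn_sub_one hn hx, two_mul_minEig_Sn_sub_one hn hx, abs_neg, max_self,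
      abs_norm, sqrt_mul_norm_mean_planarSq]

end
end
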